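/- For all sufficiently large integers k there exist an approval election E = (N, C, (A_v)_{v in N}, k) with at most 4k²(k+1)·⌈log₂ k⌉ voters and at most 2k·(⌈log₂ k⌉ + 1) candidates, a committee W_0 ⊆ C with |W_0| = k, and a valid sequence of swaps (a_1,b_1),…,(a_s,b_s) starting from W_0 of length s ≥ k^{⌈log₂ k⌉} such that Δ(W_{t−1}, a_t, b_t) > 0 for every t ∈ {1,…,s}, i.e., every swap strictly increases the PAV score. In particular, the sequence has length Ω(k^{log k}). -/

import Mathlib

/-- PAV score of committee `W` given approval ballots `A`. -/
def pavsc {V C : Type*} [Fintype V] [DecidableEq C]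
    (A : V → Finset C) (W : Finset C) : ℚ :=
  ∑ v : V, ∑ j ∈ Finset.range ((A v ∩ W).card), (1 : ℚ) / (j + 1)

/-- `Δ(W,a,b) = pavsc((W ∖ {a}) ∪ {b}) − pavsc(W)`. -/
def pavDelta {V C : Type*} [Fintype V] [DecidableEq C]
    (A : V → Finset C) (W : Finset C) (a b : C) : ℚ :=
  pavsc A (insert b (W.erase a)) - pavsc A W

/-- One swap: `W ↦ (W ∪ {b}) ∖ {a}`. -/
def swapStep {C : Type*} [DecidableEq C] (W : Finset C) (p : C × C) : Finset C :=
  (insert p.2 W).erase p.1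

/-- The committee after the first `t` swaps. -/
def committeeAt {C : Type*} [DecidableEq C] (W0 : Finset C) (swaps : List (C × C)) (t : ℕ) :
    Finset C :=
  (swaps.take t).foldl swapStep W0

/-- A sequence of swaps is valid: each `a_t ∈ W_{t-1}` and `b_t ∉ W_{t-1}`. -/
def ValidSwapSeq {C : Type*} [DecidableEq C] (W0 : Finset C) (swaps : List (C × C)) : Prop :=
  ∀ (t : ℕ) (ht : t < swaps.length),
    (swaps.get ⟨t, ht⟩).1 ∈ committeeAt W0 swaps t ∧
    (swaps.get ⟨t, ht⟩).2 ∉ committeeAt W0 swaps t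

/-!
Committees encode words of `L = ⌈log₂ k⌉` digits in base `k + 1`, and the swaps walk through all
`(k + 1) ^ L` words in the order of the reflected Gray code, so that each step replaces a single
candidate. In this code the parity of the digits before position `j` decides in which direction
digit `j` moves, hence the signed sum `∑ j, w j * (∏ i < j, (-1) ^ g i) * (2 * g j - k)` increases
along it as soon as each weight `w j` is at least `k + 1` times the next one.

Each summand is realised by a gadget of voters. The voters of level `j` are indexed by a threshold
`t < k` and an odd subset `σ` of `2 * j + 2` slots, and are arranged to approve `b + #(s ∆ σ)`
members of the committee of `g`, where `s` is a set of slots with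
`(-1) ^ #s = ± ∏ i < j, (-1) ^ g i`, the sign being negative iff `g j ≤ t`. Summing harmonic numbers
over the odd `σ` isolates, up to a constant, `(-1) ^ #s` times half the finite difference of order
`2 * j + 2` of the harmonic numbers at `b`. Two slots per digit make consecutive weights differ by
a factor of about `(b / (2 * j)) ^ 2`; with `b = k - 2 * L` this exceeds `k + 1` when
`k ≥ 16 * L ^ 2`.
-/

open Finset

section GrayCode

variable {k n : ℕ}

/-- The signed weighted digit sum that increases along the reflected Gray code. The weights are
indexed by `ℕ`, so that deleting the first digit shifts them. -/
def grayPotential (w : ℕ → ℚ) (g : Fin n → Fin (k + 1)) : ℚ :=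
  ∑ j : Fin n, w j * (∏ i ∈ Iio j, (-1) ^ (g i : ℕ)) * (2 * (g j : ℕ) - k)

/-- The list `l`, traversed backwards when `d` is odd: the order in which the reflected Gray code
runs through the words following the first digit `d`. -/
def reverseIfOdd {α : Type*} (d : ℕ) (l : List α) : List α :=
  if Even d then l else l.reverse

/-- The reflected Gray code on words of `n` digits in base `k + 1`, most significant digit first. -/
def grayCode (k : ℕ) : (n : ℕ) → List (Fin n → Fin (k + 1))
  | 0 => [Fin.elim0]
  | n + 1 => (List.ofFn fun d : Fin (k + 1) =>
      (reverseIfOdd d (grayCode k n)).map (Fin.cons d)).flatten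

/-- A change of a single digit that increases the potential with weights `w`. -/
def GrayStep (w : ℕ → ℚ) (g g' : Fin n → Fin (k + 1)) : Prop :=
  hammingDist g g' = 1 ∧ grayPotential w g < grayPotential w g'

lemma prod_Iio_succ {M : Type*} [CommMonoid M] (f : Fin (n + 1) → M) (j : Fin n) :
    ∏ i ∈ Iio j.succ, f i = f 0 * ∏ i ∈ Iio j, f i.succ := by
  have hIio : Iio j.succ = insert 0 ((Iio j).map (Fin.succEmb n)) := by
    ext i
    cases i using Fin.cases <;> simp
  rw [hIio, prod_insert (by simp), prod_map, Fin.coe_succEmb]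

lemma grayPotential_cons (w : ℕ → ℚ) (d : Fin (k + 1)) (g : Fin n → Fin (k + 1)) :
    grayPotential w (Fin.cons d g : Fin (n + 1) → Fin (k + 1)) =
      w 0 * (2 * (d : ℕ) - k) + (-1) ^ (d : ℕ) * grayPotential (fun j => w (j + 1)) g := by
  rw [grayPotential, Fin.sum_univ_succ, grayPotential, mul_sum]
  congr 1
  · have hIio : Iio (0 : Fin (n + 1)) = ∅ := Iio_bot
    simp [hIio]
  · refine sum_congr rfl fun j _ => ?_
    simp only [prod_Iio_succ, Fin.cons_zero, Fin.cons_succ, Fin.val_succ]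
    ring

lemma abs_grayPotential_le (w : ℕ → ℚ) (g : Fin n → Fin (k + 1)) :
    |grayPotential w g| ≤ k * ∑ j ∈ range n, |w j| := by
  rw [← Fin.sum_univ_eq_sum_range (fun j => |w j|), mul_sum]
  refine (abs_sum_le_sum_abs _ _).trans (sum_le_sum fun j _ => ?_)
  have hdigit : |2 * ((g j : ℕ) : ℚ) - k| ≤ k := by
    have : ((g j : ℕ) : ℚ) ≤ k := by exact_mod_cast (g j).is_le
    rw [abs_le]
    constructor <;> linarith [Nat.cast_nonneg (α := ℚ) (g j : ℕ)]
  have hsign : |∏ i ∈ Iio j, (-1 : ℚ) ^ (g i : ℕ)| = 1 := by simp [abs_prod]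
  rw [abs_mul, abs_mul, hsign, mul_one, mul_comm]
  gcongr

lemma hammingDist_cons {α : Fin (n + 1) → Type*} [∀ i, DecidableEq (α i)] (d d' : α 0)
    (g g' : ∀ i : Fin n, α i.succ) :
    hammingDist (Fin.cons d g : ∀ i, α i) (Fin.cons d' g') =
      (if d = d' then 0 else 1) + hammingDist g g' := by
  rw [hammingDist, hammingDist, Fin.card_filter_univ_succ]
  by_cases h : d = d' <;> simp [h, add_comm]

lemma mul_sum_succ_lt {R : Type*} [CommRing R] [LinearOrder R] [IsStrictOrderedRing R] {c : R}
    {w : ℕ → R} (hpos : 0 < w n) (hratio : ∀ j < n, (c + 1) * w (j + 1) ≤ w j) :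
    c * ∑ j ∈ range n, w (j + 1) < w 0 :=
  calc c * ∑ j ∈ range n, w (j + 1)
    _ ≤ ∑ j ∈ range n, (w j - w (j + 1)) := by
        rw [mul_sum]
        exact sum_le_sum fun j hj => by linarith [hratio j (mem_range.mp hj)]
    _ = w 0 - w n := sum_range_sub' w n
    _ < w 0 := by linarith

lemma length_reverseIfOdd {α : Type*} (d : ℕ) (l : List α) :
    (reverseIfOdd d l).length = l.length := by
  rw [reverseIfOdd]
  split_ifs
  · rfl
  · exact List.length_reverse

lemma head?_reverseIfOdd_succ {α : Type*} (d : ℕ) (l : List α) :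
    (reverseIfOdd (d + 1) l).head? = (reverseIfOdd d l).getLast? := by
  by_cases hd : Even d
  · rw [reverseIfOdd, reverseIfOdd, if_neg (by simpa [Nat.even_add_one]), if_pos hd,
      List.head?_reverse]
  · rw [reverseIfOdd, reverseIfOdd, if_pos (Nat.even_add_one.mpr hd), if_neg hd,
      List.getLast?_reverse]

lemma length_grayCode : (grayCode k n).length = (k + 1) ^ n := by
  induction n with
  | zero => rfl
  | succ n ih =>
    simp only [grayCode, List.length_flatten, List.map_ofFn, List.sum_ofFn, Function.comp_apply,
      List.length_map, length_reverseIfOdd, ih, sum_const, card_univ, Fintype.card_fin,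
      smul_eq_mul, pow_succ']

lemma grayCode_ne_nil : grayCode k n ≠ [] := by
  simp [← List.length_pos_iff, length_grayCode]

lemma grayStep_cons_of_even {w : ℕ → ℚ} {d : Fin (k + 1)} (hd : Even (d : ℕ))
    {g g' : Fin n → Fin (k + 1)} (h : GrayStep (fun j => w (j + 1)) g g') :
    GrayStep w (Fin.cons d g : Fin (n + 1) → Fin (k + 1)) (Fin.cons d g') := by
  refine ⟨by rw [hammingDist_cons, if_pos rfl, zero_add, h.1], ?_⟩
  rw [grayPotential_cons, grayPotential_cons, hd.neg_one_pow]
  linarith [h.2]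

lemma grayStep_cons_of_odd {w : ℕ → ℚ} {d : Fin (k + 1)} (hd : Odd (d : ℕ))
    {g g' : Fin n → Fin (k + 1)} (h : GrayStep (fun j => w (j + 1)) g' g) :
    GrayStep w (Fin.cons d g : Fin (n + 1) → Fin (k + 1)) (Fin.cons d g') := by
  refine ⟨by rw [hammingDist_cons, if_pos rfl, zero_add, hammingDist_comm, h.1], ?_⟩
  rw [grayPotential_cons, grayPotential_cons, hd.neg_one_pow]
  linarith [h.2]

lemma grayStep_cons_succ {w : ℕ → ℚ} {d d' : Fin (k + 1)} (hd : (d' : ℕ) = d + 1)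
    (hw : k * ∑ j ∈ range n, |w (j + 1)| < w 0) (g : Fin n → Fin (k + 1)) :
    GrayStep w (Fin.cons d g : Fin (n + 1) → Fin (k + 1)) (Fin.cons d' g) := by
  have hne : d ≠ d' := fun h => by simp [h] at hd
  refine ⟨by rw [hammingDist_cons, if_neg hne, hammingDist_self], ?_⟩
  have hbound := abs_lt.mp ((abs_grayPotential_le (fun j => w (j + 1)) g).trans_lt hw)
  rw [grayPotential_cons, grayPotential_cons, hd, pow_succ]
  push_cast
  -- The first summand gains `2 * w 0`, more than a sign change of the second can lose.
  rcases neg_one_pow_eq_or ℚ (d : ℕ) with hsign | hsign <;> rw [hsign] <;>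
    linarith [hbound.1, hbound.2]

lemma isChain_map_cons_reverseIfOdd {w : ℕ → ℚ} (d : Fin (k + 1))
    {l : List (Fin n → Fin (k + 1))} (hl : l.IsChain (GrayStep fun j => w (j + 1))) :
    ((reverseIfOdd d l).map (Fin.cons (α := fun _ => Fin (k + 1)) d)).IsChain (GrayStep w) := by
  rw [List.isChain_map, reverseIfOdd]
  split_ifs with hd
  · exact hl.imp fun _ _ => grayStep_cons_of_even hd
  · exact List.isChain_reverse.mpr
      (hl.imp fun _ _ => grayStep_cons_of_odd (Nat.not_even_iff_odd.mp hd))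

lemma isChain_grayCode (w : ℕ → ℚ) (hpos : ∀ j < n, 0 < w j)
    (hratio : ∀ j, j + 1 < n → (k + 1) * w (j + 1) ≤ w j) :
    (grayCode k n).IsChain (GrayStep w) := by
  induction n generalizing w with
  | zero => exact List.isChain_singleton _
  | succ n ih =>
    have hchain := ih (fun j => w (j + 1)) (fun j hj => hpos _ (by lia))
      (fun j hj => hratio _ (by lia))
    have hdominates : k * ∑ j ∈ range n, |w (j + 1)| < w 0 := by
      rw [sum_congr rfl fun j hj => abs_of_pos (hpos (j + 1) (by have := mem_range.mp hj; lia))]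
      exact mul_sum_succ_lt (hpos n (by lia)) fun j hj => hratio j (by lia)
    refine (List.isChain_flatten ?_).mpr ⟨?_, List.isChain_ofFn.mpr fun d hd => ?_⟩
    · rw [List.mem_ofFn]
      rintro ⟨d, hd⟩
      exact grayCode_ne_nil (List.length_eq_zero_iff.mp
        ((length_reverseIfOdd d _).symm.trans (by simpa using congrArg List.length hd)))
    · exact List.forall_mem_ofFn_iff.mpr fun d => isChain_map_cons_reverseIfOdd d hchain
    · simp only [List.getLast?_map, List.head?_map, head?_reverseIfOdd_succ, Option.mem_def,
        Option.map_eq_some_iff]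
      rintro _ ⟨g, hg, rfl⟩ _ ⟨g', hg', rfl⟩
      obtain rfl : g = g' := Option.some_injective _ (hg.symm.trans hg')
      exact grayStep_cons_succ rfl hdominates g

end GrayCode

section FiniteDifferences

lemma fwdDiff_iter_succ_harmonic (r b : ℕ) :
    (fwdDiff 1)^[r + 1] harmonic b = (-1) ^ r * r.factorial / (b + 1).ascFactorial (r + 1) := by
  induction r generalizing b with
  | zero => simp [fwdDiff, harmonic_succ, Nat.ascFactorial]
  | succ r ih =>
    have : (0 : ℚ) < (b + 1).ascFactorial (r + 1) := by
      exact_mod_cast Nat.ascFactorial_pos b (r + 1)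
    have hsucc : ((b + 1).ascFactorial (r + 2) : ℚ) =
        (b + r + 2) * (b + 1).ascFactorial (r + 1) := by
      rw [Nat.ascFactorial_succ]
      push_cast
      ring
    have hshift : ((b + 2).ascFactorial (r + 1) : ℚ) =
        (b + r + 2) / (b + 1) * (b + 1).ascFactorial (r + 1) := by
      have h : ((b + 1 : ℕ) : ℚ) * (b + 2).ascFactorial (r + 1) =
          (b + 1 + (r + 1) : ℕ) * (b + 1).ascFactorial (r + 1) := by
        exact_mod_cast Nat.succ_ascFactorial (b + 1) (r + 1)
      push_cast at h
      field_simp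
      linear_combination h
    rw [Function.iterate_succ_apply', fwdDiff, ih, ih, hshift, hsucc, Nat.factorial_succ]
    push_cast
    field_simp
    ring

lemma neg_one_pow_card_filter_odd {α R : Type*} [CommMonoid R] [HasDistribNeg R]
    (s : Finset α) (f : α → ℕ) :
    (-1 : R) ^ #{i ∈ s | Odd (f i)} = ∏ i ∈ s, (-1) ^ f i := by
  rw [← prod_const, prod_filter]
  refine prod_congr rfl fun i _ => ?_
  split_ifs with h
  · exact h.neg_one_pow.symm
  · exact (Nat.not_odd_iff_even.mp h).neg_one_pow.symm

lemma sum_powerset_neg_one_pow_card_mul {α R : Type*} [CommRing R] (t : Finset α)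
    (f : ℕ → R) (b : ℕ) :
    ∑ u ∈ t.powerset, (-1) ^ #u * f (b + #u) = (-1) ^ #t * (fwdDiff 1)^[#t] f b := by
  rw [sum_powerset_apply_card (fun m => (-1) ^ m * f (b + m)), fwdDiff_iter_eq_sum_shift, mul_sum]
  refine sum_congr rfl fun m hm => ?_
  have hsign : (-1 : R) ^ #t * (-1) ^ (#t - m) = (-1) ^ m := by
    obtain ⟨c, hc⟩ := Nat.exists_eq_add_of_le (Nat.lt_succ_iff.mp (mem_range.mp hm))
    rw [hc, Nat.add_sub_cancel_left, pow_add, mul_assoc, ← mul_pow, neg_one_mul, neg_neg, one_pow,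
      mul_one]
  rw [← hsign]
  simp only [nsmul_eq_mul, zsmul_eq_mul, mul_one, smul_eq_mul]
  push_cast
  ring

variable {α R : Type*} [DecidableEq α]

lemma neg_one_pow_card_symmDiff [Monoid R] [HasDistribNeg R] (s t : Finset α) :
    (-1 : R) ^ #(symmDiff s t) = (-1) ^ #s * (-1) ^ #t := by
  have hcard : #(symmDiff s t) + 2 * #(s ∩ t) = #s + #t := by
    rw [symmDiff, sup_eq_union, card_union_of_disjoint disjoint_sdiff_sdiff,
      ← card_sdiff_add_card_inter s t, ← card_sdiff_add_card_inter t s, inter_comm t s]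
    ring
  rw [← pow_add, ← hcard, pow_add, pow_mul, neg_one_sq, one_pow, mul_one]

lemma sum_powerset_symmDiff [AddCommMonoid R] {s t : Finset α} (hs : s ⊆ t)
    (f : Finset α → R) :
    ∑ u ∈ t.powerset, f (symmDiff s u) = ∑ u ∈ t.powerset, f u := by
  have hmaps : ∀ u ∈ t.powerset, symmDiff s u ∈ t.powerset := fun u hu =>
    mem_powerset.mpr (symmDiff_le_sup.trans (union_subset hs (mem_powerset.mp hu)))
  exact sum_nbij' (symmDiff s) (symmDiff s) hmaps hmaps
    (fun u _ => symmDiff_symmDiff_cancel_left s u) (fun u _ => symmDiff_symmDiff_cancel_left s u)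
    (fun _ _ => rfl)

lemma two_mul_sum_odd_symmDiff [CommRing R] {s t : Finset α} (hs : s ⊆ t) (f : ℕ → R) :
    2 * ∑ u ∈ t.powerset with Odd #u, f #(symmDiff s u) =
      ∑ u ∈ t.powerset, f #u - (-1) ^ #s * ∑ u ∈ t.powerset, (-1) ^ #u * f #u := by
  have hodd (u : Finset α) : 2 * (if Odd #u then f #(symmDiff s u) else 0) =
      f #(symmDiff s u) - (-1) ^ #s * ((-1) ^ #(symmDiff s u) * f #(symmDiff s u)) := by
    have hsign : (-1 : R) ^ #s * (-1) ^ #(symmDiff s u) = (-1) ^ #u := by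
      rw [← neg_one_pow_card_symmDiff, symmDiff_symmDiff_cancel_left]
    rw [← mul_assoc, hsign]
    split_ifs with h
    · rw [h.neg_one_pow]
      ring
    · rw [(Nat.not_odd_iff_even.mp h).neg_one_pow]
      ring
  rw [sum_filter, mul_sum, sum_congr rfl fun u _ => hodd u, sum_sub_distrib, ← mul_sum,
    sum_powerset_symmDiff hs fun u => f #u, sum_powerset_symmDiff hs fun u => (-1) ^ #u * f #u]

end FiniteDifferences

section Swaps

variable {V C : Type*} [Fintype V] [DecidableEq C]

/-- Passing from `W` to `W'` is a single swap that is valid and increases the PAV score. -/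
def IsImprovingSwap (A : V → Finset C) (W W' : Finset C) : Prop :=
  ∃ p : C × C, p.1 ∈ W ∧ p.2 ∉ W ∧ swapStep W p = W' ∧ pavsc A W < pavsc A W'

lemma pavDelta_eq_swapStep (A : V → Finset C) {W : Finset C} {p : C × C} (h₁ : p.1 ∈ W)
    (h₂ : p.2 ∉ W) : pavDelta A W p.1 p.2 = pavsc A (swapStep W p) - pavsc A W := by
  rw [pavDelta, swapStep, erase_insert_of_ne (ne_of_mem_of_not_mem h₁ h₂).symm]

lemma exists_swaps_of_isChain {A : V → Finset C} {W : Finset C} {l : List (Finset C)}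
    (hl : (W :: l).IsChain (IsImprovingSwap A)) :
    ∃ swaps : List (C × C), swaps.length = l.length ∧ ValidSwapSeq W swaps ∧
      ∀ (t : ℕ) (ht : t < swaps.length), 0 < pavDelta A (committeeAt W swaps t)
        (swaps.get ⟨t, ht⟩).1 (swaps.get ⟨t, ht⟩).2 := by
  induction l generalizing W with
  | nil => exact ⟨[], rfl, fun t ht => absurd ht t.not_lt_zero, fun t ht => absurd ht t.not_lt_zero⟩
  | cons W' l ih =>
    obtain ⟨⟨p, h₁, h₂, rfl, hlt⟩, htail⟩ := List.isChain_cons_cons.mp hl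
    obtain ⟨swaps, hlength, hvalid, himproving⟩ := ih htail
    refine ⟨p :: swaps, by rw [List.length_cons, List.length_cons, hlength], ?_, ?_⟩
    · rintro (_ | t) ht
      · exact ⟨h₁, h₂⟩
      · exact hvalid t (Nat.lt_of_succ_lt_succ ht)
    · rintro (_ | t) ht
      · exact (sub_pos.mpr hlt).trans_eq (pavDelta_eq_swapStep A h₁ h₂).symm
      · exact himproving t (Nat.lt_of_succ_lt_succ ht)

lemma pavsc_eq_sum_harmonic (A : V → Finset C) (W : Finset C) :
    pavsc A W = ∑ v, harmonic #(A v ∩ W) := by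
  simp [pavsc, harmonic]

variable {V' C' : Type*} [Fintype V'] [DecidableEq C']

lemma pavsc_map (e : V' ≃ V) (f : C ↪ C') (A : V → Finset C) (W : Finset C) :
    pavsc (fun v => (A (e v)).map f) (W.map f) = pavsc A W := by
  simp only [pavsc, ← map_inter, card_map]
  exact e.sum_comp fun v => ∑ j ∈ range #(A v ∩ W), (1 : ℚ) / (j + 1)

lemma IsImprovingSwap.map (e : V' ≃ V) (f : C ↪ C') {A : V → Finset C} {W W' : Finset C}
    (h : IsImprovingSwap A W W') :
    IsImprovingSwap (fun v => (A (e v)).map f) (W.map f) (W'.map f) := by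
  obtain ⟨p, h₁, h₂, rfl, hlt⟩ := h
  refine ⟨(f p.1, f p.2), mem_map_of_mem f h₁, by simpa using h₂, ?_, ?_⟩
  · simp [swapStep, map_erase, map_insert]
  · rwa [pavsc_map, pavsc_map]

lemma exists_fin_election_of_isChain [Fintype C] {A : V → Finset C} {W : Finset C}
    {l : List (Finset C)} (hl : (W :: l).IsChain (IsImprovingSwap A)) :
    ∃ (A' : Fin (Fintype.card V) → Finset (Fin (Fintype.card C)))
      (W₀ : Finset (Fin (Fintype.card C)))
      (swaps : List (Fin (Fintype.card C) × Fin (Fintype.card C))),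
      #W₀ = #W ∧ swaps.length = l.length ∧ ValidSwapSeq W₀ swaps ∧
        ∀ (t : ℕ) (ht : t < swaps.length), 0 < pavDelta A' (committeeAt W₀ swaps t)
          (swaps.get ⟨t, ht⟩).1 (swaps.get ⟨t, ht⟩).2 := by
  let e := (Fintype.equivFin V).symm
  let f := (Fintype.equivFin C).toEmbedding
  have hmap : (W.map f :: l.map (Finset.map f)).IsChain
      (IsImprovingSwap fun v => (A (e v)).map f) := by
    rw [← List.map_cons, List.isChain_map]
    exact hl.imp fun _ _ => IsImprovingSwap.map e f
  obtain ⟨swaps, hlength, hvalid, himproving⟩ := exists_swaps_of_isChain hmap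
  exact ⟨_, _, swaps, card_map f, by rw [hlength, List.length_map], hvalid, himproving⟩

end Swaps

section Election

lemma card_filter_graph {α β : Type*} [Fintype α] [Fintype β] [DecidableEq β] (p : α × β → Prop)
    [DecidablePred p] (g : α → β) :
    #{x : α × β | p x ∧ g x.1 = x.2} = #{i | p (i, g i)} :=
  (card_bij (fun i _ => (i, g i)) (by simp) (by grind) (by grind)).symm

variable {L k : ℕ}

/-- The candidates: one for each pair of a position and a digit, followed by `L + b` candidates who
sit on every committee and serve to adjust how many members a voter approves. -/
abbrev GrayCandidate (L k b : ℕ) : Type := (Fin L × Fin (k + 1)) ⊕ (Fin L ⊕ Fin b)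

/-- The committee encoding the word `g`. -/
def grayCommittee (b : ℕ) (g : Fin L → Fin (k + 1)) : Finset (GrayCandidate L k b) :=
  ({x | g x.1 = x.2} : Finset (Fin L × Fin (k + 1))).disjSum univ

lemma card_grayCommittee (b : ℕ) (g : Fin L → Fin (k + 1)) :
    #(grayCommittee b g) = 2 * L + b := by
  have hdigits := card_filter_graph (fun _ => True) g
  simp only [true_and, filter_true, card_univ, Fintype.card_fin] at hdigits
  rw [grayCommittee, card_disjSum, hdigits, card_univ, Fintype.card_sum, Fintype.card_fin,
    Fintype.card_fin]
  ring

lemma exists_swap_grayCommittee (b : ℕ) {g g' : Fin L → Fin (k + 1)} (h : hammingDist g g' = 1) :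
    ∃ p : GrayCandidate L k b × GrayCandidate L k b,
      p.1 ∈ grayCommittee b g ∧ p.2 ∉ grayCommittee b g ∧
        swapStep (grayCommittee b g) p = grayCommittee b g' := by
  obtain ⟨i, hi⟩ := card_eq_one.mp h
  have hdiff (j : Fin L) : g j ≠ g' j ↔ j = i := by simpa using Finset.ext_iff.mp hi j
  have hne : g i ≠ g' i := (hdiff i).mpr rfl
  refine ⟨(.inl (i, g i), .inl (i, g' i)), by simp [grayCommittee], by simpa [grayCommittee], ?_⟩
  ext (⟨j, d⟩ | c)
  · simp only [swapStep, grayCommittee, mem_erase, mem_insert, inl_mem_disjSum, mem_filter_univ,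
      ne_eq, Sum.inl.injEq, Prod.mk.injEq]
    grind
  · simp [swapStep, grayCommittee]

/-- The slots of level `j`, two for each position up to `j`. The `inl` copy of a position stands for
its digit candidates, the `inr` copy for one of the fixed members. -/
def levelSlots (j : Fin L) : Finset (Fin L ⊕ Fin L) := (Iic j).disjSum (Iic j)

/-- The digit candidates whose approval is inverted for the voters of level `j` and threshold `t`:
they make the parity of the digits before `j` and the comparison of digit `j` with `t` visible. -/
def flippedDigits (j : Fin L) (t : Fin k) : Finset (Fin L × Fin (k + 1)) :=
  {x | (x.1 < j ∧ Odd (x.2 : ℕ)) ∨ (x.1 = j ∧ (x.2 : ℕ) ≤ t)}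

/-- The slots of level `j` at which the word `g` uses an inverted digit candidate. -/
def flippedSlots (j : Fin L) (t : Fin k) (g : Fin L → Fin (k + 1)) : Finset (Fin L ⊕ Fin L) :=
  ({i | (i, g i) ∈ flippedDigits j t} : Finset (Fin L)).disjSum ∅

/-- The voters: triples of a level, a threshold and an odd set of slots. -/
abbrev GrayVoter (L k : ℕ) : Type :=
  Σ j : Fin L, Fin k × {σ // σ ∈ {σ ∈ (levelSlots j).powerset | Odd #σ}}

/-- The ballot of a voter with slot set `σ`: the digit candidates given by the `inl` part of `σ`, up
to inversion, the fixed members given by its `inr` part, and the last `b` fixed members. -/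
def grayBallot (b : ℕ) (v : GrayVoter L k) : Finset (GrayCandidate L k b) :=
  ({x | ¬(x ∈ flippedDigits v.1 v.2.1 ↔ .inl x.1 ∈ v.2.2.1)} : Finset (Fin L × Fin (k + 1))).disjSum
    (v.2.2.1.toRight.disjSum univ)

lemma card_levelSlots (j : Fin L) : #(levelSlots j) = 2 * j + 2 := by
  rw [levelSlots, card_disjSum, Fin.card_Iic]
  ring

lemma flippedSlots_subset_levelSlots (j : Fin L) (t : Fin k) (g : Fin L → Fin (k + 1)) :
    flippedSlots j t g ⊆ levelSlots j := by
  refine disjSum_mono (fun i hi => mem_Iic.mpr ?_) (empty_subset _)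
  simp only [flippedDigits, mem_filter_univ] at hi
  exact hi.elim (fun h => h.1.le) (fun h => h.1.le)

lemma card_grayBallot_inter_grayCommittee (b : ℕ) (v : GrayVoter L k) (g : Fin L → Fin (k + 1)) :
    #(grayBallot b v ∩ grayCommittee b g) =
      b + #(symmDiff (flippedSlots v.1 v.2.1 g) v.2.2.1) := by
  obtain ⟨j, t, σ, hσ⟩ := v
  have hballot : grayBallot b ⟨j, t, σ, hσ⟩ ∩ grayCommittee b g =
      ({x | ¬(x ∈ flippedDigits j t ↔ .inl x.1 ∈ σ) ∧ g x.1 = x.2} :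
        Finset (Fin L × Fin (k + 1))).disjSum (σ.toRight.disjSum univ) := by
    ext (x | x) <;> simp [grayBallot, grayCommittee]
  have hslots : symmDiff (flippedSlots j t g) σ =
      ({i | ¬((i, g i) ∈ flippedDigits j t ↔ .inl i ∈ σ)} : Finset (Fin L)).disjSum σ.toRight := by
    ext (i | i)
    · simp only [flippedSlots, mem_symmDiff, inl_mem_disjSum, mem_filter_univ]
      tauto
    · simp [flippedSlots, mem_symmDiff]
  rw [hballot, hslots, card_disjSum, card_disjSum, card_disjSum, card_filter_graph, card_univ,
    Fintype.card_fin]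
  ring

lemma neg_one_pow_card_flippedSlots (j : Fin L) (t : Fin k) (g : Fin L → Fin (k + 1)) :
    (-1 : ℚ) ^ #(flippedSlots j t g) =
      (∏ i ∈ Iio j, (-1) ^ (g i : ℕ)) * if (g j : ℕ) ≤ t then -1 else 1 := by
  have hsplit : ({i | (i, g i) ∈ flippedDigits j t} : Finset (Fin L)) =
      {i ∈ Iio j | Odd (g i : ℕ)} ∪ {i ∈ ({j} : Finset (Fin L)) | (g i : ℕ) ≤ t} := by
    ext i
    simp only [flippedDigits, mem_filter, mem_univ, true_and, mem_union, mem_Iio, mem_singleton]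
  have hdisj : Disjoint {i ∈ Iio j | Odd (g i : ℕ)}
      {i ∈ ({j} : Finset (Fin L)) | (g i : ℕ) ≤ t} :=
    disjoint_filter_filter (by simp)
  rw [flippedSlots, card_disjSum, card_empty, add_zero, hsplit, card_union_of_disjoint hdisj,
    pow_add, neg_one_pow_card_filter_odd, filter_singleton]
  split_ifs <;> simp

lemma sum_threshold_sign {d : ℕ} (hd : d ≤ k) :
    ∑ t : Fin k, (if d ≤ t then (-1 : ℚ) else 1) = 2 * d - k := by
  obtain ⟨e, rfl⟩ := Nat.exists_eq_add_of_le hd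
  rw [Fin.sum_univ_eq_sum_range (fun t => if d ≤ t then (-1 : ℚ) else 1), sum_range_add,
    sum_congr rfl (g := fun _ => (1 : ℚ)) fun t ht => if_neg (mem_range.mp ht).not_ge]
  simp only [sum_const, card_range, nsmul_eq_mul, le_add_iff_nonneg_right, zero_le, if_true]
  push_cast
  ring

/-- The weight of digit `j`: half the absolute value of the finite difference of order `2 * j + 2`
of the harmonic numbers at `b`. -/
def levelWeight (b j : ℕ) : ℚ :=
  (2 * j + 1).factorial / (2 * (b + 1).ascFactorial (2 * j + 2))

lemma levelWeight_pos (b j : ℕ) : 0 < levelWeight b j := by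
  have := Nat.ascFactorial_pos b (2 * j + 2)
  unfold levelWeight
  positivity

lemma sum_harmonic_flippedSlots (b : ℕ) (j : Fin L) (t : Fin k) (g : Fin L → Fin (k + 1)) :
    ∑ σ ∈ (levelSlots j).powerset with Odd #σ, harmonic (b + #(symmDiff (flippedSlots j t g) σ)) =
      (∑ σ ∈ (levelSlots j).powerset, harmonic (b + #σ)) / 2 +
        (-1) ^ #(flippedSlots j t g) * levelWeight b j := by
  have heven : Even (2 * (j : ℕ) + 2) := ⟨j + 1, by ring⟩
  have hodd : Odd (2 * (j : ℕ) + 1) := ⟨j, rfl⟩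
  have hsum := two_mul_sum_odd_symmDiff (flippedSlots_subset_levelSlots j t g)
    fun m => harmonic (b + m)
  rw [sum_powerset_neg_one_pow_card_mul, card_levelSlots, fwdDiff_iter_succ_harmonic,
    heven.neg_one_pow, hodd.neg_one_pow] at hsum
  rw [levelWeight]
  linear_combination hsum / 2

lemma exists_pavsc_grayCommittee (L k b : ℕ) :
    ∃ c : ℚ, ∀ g : Fin L → Fin (k + 1),
      pavsc (grayBallot b) (grayCommittee b g) = c + grayPotential (levelWeight b) g := by
  refine ⟨∑ j : Fin L, ∑ _t : Fin k, (∑ σ ∈ (levelSlots j).powerset, harmonic (b + #σ)) / 2,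
    fun g => ?_⟩
  rw [pavsc_eq_sum_harmonic, Fintype.sum_sigma, grayPotential, ← sum_add_distrib]
  refine sum_congr rfl fun j _ => ?_
  have hthreshold (t : Fin k) :
      ∑ σ : {σ // σ ∈ {σ ∈ (levelSlots j).powerset | Odd #σ}},
          harmonic #(grayBallot b ⟨j, t, σ⟩ ∩ grayCommittee b g) =
        (∑ σ ∈ (levelSlots j).powerset, harmonic (b + #σ)) / 2 +
          levelWeight b j * (∏ i ∈ Iio j, (-1) ^ (g i : ℕ)) * if (g j : ℕ) ≤ t then -1 else 1 := by
    simp only [card_grayBallot_inter_grayCommittee]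
    rw [sum_coe_sort {σ ∈ (levelSlots j).powerset | Odd #σ}
      (fun σ => harmonic (b + #(symmDiff (flippedSlots j t g) σ))), sum_harmonic_flippedSlots,
      neg_one_pow_card_flippedSlots]
    ring
  rw [Fintype.sum_prod_type, sum_congr rfl fun t _ => hthreshold t, sum_add_distrib, ← mul_sum,
    sum_threshold_sign (g j).is_le]

lemma mul_levelWeight_succ_le {b j : ℕ}
    (h : (k + 1) * ((2 * j + 2) * (2 * j + 3)) ≤ (b + 2 * j + 3) * (b + 2 * j + 4)) :
    (k + 1) * levelWeight b (j + 1) ≤ levelWeight b j := by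
  have hasc : ((b + 1).ascFactorial (2 * (j + 1) + 2) : ℚ) =
      (b + 2 * j + 3) * (b + 2 * j + 4) * (b + 1).ascFactorial (2 * j + 2) := by
    rw [show 2 * (j + 1) + 2 = 2 * j + 2 + 1 + 1 by ring, Nat.ascFactorial_succ,
      Nat.ascFactorial_succ]
    push_cast
    ring
  have hfact : ((2 * (j + 1) + 1).factorial : ℚ) =
      (2 * j + 2) * (2 * j + 3) * (2 * j + 1).factorial := by
    rw [show 2 * (j + 1) + 1 = 2 * j + 1 + 1 + 1 by ring, Nat.factorial_succ, Nat.factorial_succ]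
    push_cast
    ring
  have hratio : levelWeight b (j + 1) = levelWeight b j *
      ((2 * j + 2) * (2 * j + 3) / ((b + 2 * j + 3) * (b + 2 * j + 4))) := by
    rw [levelWeight, levelWeight, hasc, hfact]
    field_simp
  rw [hratio, mul_left_comm]
  refine mul_le_of_le_one_right (levelWeight_pos b j).le ?_
  rw [← mul_div_assoc]
  exact div_le_one_of_le₀ (by exact_mod_cast h) (by positivity)

lemma isChain_grayCommittee {b : ℕ} (h : (k + 1) * (2 * L) ^ 2 ≤ b ^ 2) :
    ((grayCode k L).map (grayCommittee b)).IsChain (IsImprovingSwap (grayBallot b)) := by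
  have hratio (j : ℕ) (hj : j + 1 < L) :
      (k + 1) * levelWeight b (j + 1) ≤ levelWeight b j := by
    refine mul_levelWeight_succ_le ?_
    calc (k + 1) * ((2 * j + 2) * (2 * j + 3))
      _ ≤ (k + 1) * (2 * L) ^ 2 := by rw [sq]; gcongr <;> lia
      _ ≤ b ^ 2 := h
      _ ≤ (b + 2 * j + 3) * (b + 2 * j + 4) := by rw [sq]; gcongr <;> lia
  obtain ⟨c, hscore⟩ := exists_pavsc_grayCommittee L k b
  refine (List.isChain_map _).mpr
    ((isChain_grayCode _ (fun j _ => levelWeight_pos b j) hratio).imp fun g g' hstep => ?_)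
  obtain ⟨p, h₁, h₂, hswap⟩ := exists_swap_grayCommittee b hstep.1
  refine ⟨p, h₁, h₂, hswap, ?_⟩
  rw [hscore, hscore]
  linarith [hstep.2]

lemma card_grayVoter_le (h : 2 ^ L ≤ 2 * k) :
    Fintype.card (GrayVoter L k) ≤ 4 * k ^ 2 * k * L := by
  have hodd (j : Fin L) :
      Fintype.card {σ // σ ∈ {σ ∈ (levelSlots j).powerset | Odd #σ}} ≤ 4 * k ^ 2 :=
    calc Fintype.card {σ // σ ∈ {σ ∈ (levelSlots j).powerset | Odd #σ}}
      _ ≤ Fintype.card (Finset (Fin L ⊕ Fin L)) := Fintype.card_subtype_le _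
      _ = (2 ^ L) ^ 2 := by simp [pow_add, sq]
      _ ≤ (2 * k) ^ 2 := by gcongr
      _ = 4 * k ^ 2 := by ring
  calc Fintype.card (GrayVoter L k)
    _ = ∑ j : Fin L, k * Fintype.card {σ // σ ∈ {σ ∈ (levelSlots j).powerset | Odd #σ}} := by
        simp only [Fintype.card_sigma, Fintype.card_prod, Fintype.card_fin]
    _ ≤ ∑ _j : Fin L, k * (4 * k ^ 2) := by
        gcongr with j
        exact hodd j
    _ = 4 * k ^ 2 * k * L := by
        rw [sum_const, card_univ, Fintype.card_fin, smul_eq_mul]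
        ring

lemma card_grayCandidate (L b : ℕ) :
    Fintype.card (GrayCandidate L (2 * L + b) b) = (2 * L + b) * (L + 1) := by
  simp only [Fintype.card_sum, Fintype.card_prod, Fintype.card_fin]
  ring

end Election

section Parameters

lemma sixteen_mul_sq_le_two_pow_pred {n : ℕ} (hn : 13 ≤ n) : 16 * n ^ 2 ≤ 2 ^ (n - 1) := by
  induction n, hn using Nat.le_induction with
  | base => norm_num
  | succ n hn ih =>
    obtain ⟨m, rfl⟩ := Nat.exists_eq_add_of_le' hn
    simp only [Nat.add_sub_cancel, Nat.add_succ_sub_one, pow_succ] at ih ⊢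
    nlinarith

lemma sixteen_mul_clog_sq_le {k : ℕ} (hk : 2 ^ 13 ≤ k) : 16 * Nat.clog 2 k ^ 2 ≤ k := by
  have hclog : 13 ≤ Nat.clog 2 k := by
    simpa only [Nat.clog_pow 2 13 one_lt_two] using Nat.clog_mono_right 2 hk
  exact (sixteen_mul_sq_le_two_pow_pred hclog).trans
    (Nat.pow_pred_clog_lt_self one_lt_two (by lia)).le

lemma two_pow_clog_le {k : ℕ} (hk : 1 < k) : 2 ^ Nat.clog 2 k ≤ 2 * k := by
  have hpred := Nat.pow_pred_clog_lt_self one_lt_two hk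
  rw [← Nat.succ_pred_eq_of_pos (Nat.clog_pos one_lt_two hk), pow_succ']
  lia

lemma succ_mul_sq_le_sq {L b : ℕ} (hL : 0 < L) (h : 16 * L ^ 2 ≤ 2 * L + b) :
    (2 * L + b + 1) * (2 * L) ^ 2 ≤ b ^ 2 := by
  have hb : 14 * L ^ 2 ≤ b := by nlinarith
  calc (2 * L + b + 1) * (2 * L) ^ 2
    _ ≤ 2 * b * (2 * L) ^ 2 := by
        gcongr
        nlinarith
    _ = b * (8 * L ^ 2) := by ring
    _ ≤ b ^ 2 := by
        rw [sq b]
        gcongr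
        lia

end Parameters

/-- For all sufficiently large `k` there exist an approval election with
at most `4k²(k+1)·⌈log₂ k⌉` voters and at most `2k·(⌈log₂ k⌉+1)` candidates, a committee
`W₀` of size `k`, and a valid sequence of swaps starting from `W₀` of length at least
`k^⌈log₂ k⌉` each of which strictly increases the PAV score. -/
theorem main_lower_bound_adversarial :
    ∃ K : ℕ, ∀ k : ℕ, K ≤ k →
    ∃ (n m : ℕ) (A : Fin n → Finset (Fin m)) (W0 : Finset (Fin m))
      (swaps : List (Fin m × Fin m)),
      1 ≤ k ∧ k ≤ m ∧
      n ≤ 4 * k ^ 2 * (k + 1) * Nat.clog 2 k ∧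
      m ≤ 2 * k * (Nat.clog 2 k + 1) ∧
      W0.card = k ∧
      k ^ Nat.clog 2 k ≤ swaps.length ∧
      ValidSwapSeq W0 swaps ∧
      ∀ (t : ℕ) (ht : t < swaps.length),
        0 < pavDelta A (committeeAt W0 swaps t)
              (swaps.get ⟨t, ht⟩).1 (swaps.get ⟨t, ht⟩).2 := by
  refine ⟨2 ^ 13, fun k hk => ?_⟩
  have hsq := sixteen_mul_clog_sq_le hk
  have hpow := two_pow_clog_le (k := k) (by lia)
  have hpos : 0 < Nat.clog 2 k := Nat.clog_pos one_lt_two (by lia)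
  generalize Nat.clog 2 k = L at hsq hpow hpos ⊢
  obtain ⟨b, rfl⟩ : ∃ b, k = 2 * L + b := Nat.exists_eq_add_of_le (by nlinarith)
  have hchain := isChain_grayCommittee (succ_mul_sq_le_sq hpos hsq)
  have hcode := length_grayCode (k := 2 * L + b) (n := L)
  obtain ⟨g, l, hl⟩ := List.exists_cons_of_ne_nil (grayCode_ne_nil (k := 2 * L + b) (n := L))
  rw [hl, List.map_cons] at hchain
  rw [hl, List.length_cons] at hcode
  obtain ⟨A, W₀, swaps, hcard, hlength, hvalid, himproving⟩ := exists_fin_election_of_isChain hchain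
  have hlong : (2 * L + b) ^ L < l.length + 1 :=
    hcode ▸ Nat.pow_lt_pow_left (Nat.lt_succ_self _) hpos.ne'
  refine ⟨_, _, A, W₀, swaps, by lia, ?_, (card_grayVoter_le hpow).trans ?_, ?_,
    hcard.trans (card_grayCommittee b g), ?_, hvalid, himproving⟩
  · exact card_grayCandidate L b ▸ Nat.le_mul_of_pos_right _ L.succ_pos
  · exact Nat.mul_le_mul_right _ (Nat.mul_le_mul_left _ (Nat.le_succ _))
  · rw [card_grayCandidate]
    gcongr
    lia
  · rw [hlength, List.length_map]
    exact Nat.lt_succ_iff.mp hlong
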